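/- For all Silver trees T₁ and T₂, either [T₁] ∩ [T₂] is finite, or there exists a Silver tree T with T ⊆ T₁ ∩ T₂ (so in particular [T] ⊆ [T₁] ∩ [T₂]). Consequently, if T₁ and T₂ have no common Silver subtree, then [T₁] ∩ [T₂] is finite. -/

import Mathlib

/-- `T` is a tree of finite binary sequences: closed under initial segments. -/
def IsTree (T : Set (List Bool)) : Prop :=
  ∀ t ∈ T, ∀ k : ℕ, t.take k ∈ T

/-- `t` is a splitting node of `T`: it lies in `T` and both its one-bit extensions do. -/
def SplitNode (T : Set (List Bool)) (t : List Bool) : Prop :=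
  t ∈ T ∧ t ++ [false] ∈ T ∧ t ++ [true] ∈ T

/-- `T` is a perfect tree: a nonempty tree in which every node extends to a splitting node. -/
def IsPerfect (T : Set (List Bool)) : Prop :=
  IsTree T ∧ T.Nonempty ∧ ∀ t ∈ T, ∃ s, t <+: s ∧ SplitNode T s

/-- `T` is a Silver (uniform perfect) tree: perfect, and nodes of equal length
have the same one-bit extensions in `T`. -/
def IsSilver (T : Set (List Bool)) : Prop :=
  IsPerfect T ∧ ∀ s ∈ T, ∀ t ∈ T, s.length = t.length →
    ∀ i : Bool, (s ++ [i] ∈ T ↔ t ++ [i] ∈ T)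

/-- The body `[T]` of a tree: all infinite branches whose finite initial
segments all lie in `T`. -/
def body (T : Set (List Bool)) : Set (ℕ → Bool) :=
  { x | ∀ n : ℕ, (List.ofFn fun i : Fin n => x i) ∈ T }

/-- The tree of sequences obeying the coordinatewise constraint `A`. -/
def coordTree (A : ℕ → Bool → Prop) : Set (List Bool) :=
  {t | ∀ i b, t[i]? = some b → A i b}

theorem coordTree_append (A : ℕ → Bool → Prop) (t : List Bool) (b : Bool) :
    t ++ [b] ∈ coordTree A ↔ t ∈ coordTree A ∧ A t.length b := by
  simp only [coordTree, Set.mem_ofPred_eq]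
  constructor
  · intro h
    refine ⟨fun i c hc => h i c ?_, h _ _ (by simp)⟩
    grind
  · rintro ⟨h, hb⟩ i c hc
    rcases lt_trichotomy i t.length with hi | hi | hi
    · exact h i c (by grind)
    · have : b = c := by grind
      subst this; subst hi; exact hb
    · grind

theorem nil_mem_coordTree (A : ℕ → Bool → Prop) : [] ∈ coordTree A := by
  simp [coordTree]

theorem silver_eq_coordTree (T : Set (List Bool)) (h : IsSilver T) :
    ∃ A, T = coordTree A := by
  obtain ⟨⟨ht, ⟨t0, h0⟩, -⟩, hu⟩ := h
  refine ⟨fun n b => ∃ s ∈ T, s.length = n ∧ s ++ [b] ∈ T, ?_⟩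
  ext t
  induction t using List.reverseRecOn with
  | nil =>
    have : [] ∈ T := by simpa using ht t0 h0 0
    simp [this, nil_mem_coordTree]
  | append_singleton t b ih =>
    rw [coordTree_append, ← ih]
    constructor
    · intro h
      have : t ∈ T := by simpa using ht _ h t.length
      exact ⟨this, t, this, rfl, h⟩
    · rintro ⟨h, s, hs, hl, hb⟩
      exact (hu s hs t h hl b).1 hb

theorem coordTree_silver (C : ℕ → Bool → Prop) (f : ℕ → Bool) (hf : ∀ n, C n (f n))
    (hC : ∀ N, ∃ n ≥ N, C n false ∧ C n true) : IsSilver (coordTree C) := by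
  refine ⟨⟨?_, ⟨[], nil_mem_coordTree C⟩, ?_⟩, ?_⟩
  · intro t ht k i b hb
    exact ht i b (by grind)
  · intro t ht
    obtain ⟨n, hn, h0, h1⟩ := hC t.length
    have key : ∀ k, ∃ s, t <+: s ∧ s ∈ coordTree C ∧ s.length = t.length + k := by
      intro k
      induction k with
      | zero => exact ⟨t, List.prefix_rfl, ht, rfl⟩
      | succ k ih =>
        obtain ⟨s, h1, h2, h3⟩ := ih
        exact ⟨s ++ [f s.length], h1.trans (List.prefix_append _ _),
          (coordTree_append _ _ _).2 ⟨h2, hf _⟩, by simp [h3]; omega⟩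
    obtain ⟨s, hp, hs, hl⟩ := key (n - t.length)
    have hl' : s.length = n := by omega
    exact ⟨s, hp, hs, (coordTree_append _ _ _).2 ⟨hs, hl' ▸ h0⟩,
      (coordTree_append _ _ _).2 ⟨hs, hl' ▸ h1⟩⟩
  · intro s hs t ht hl i
    rw [coordTree_append, coordTree_append, hl]
    simp [hs, ht]

theorem body_coordTree {A : ℕ → Bool → Prop} {x : ℕ → Bool} (h : x ∈ body (coordTree A))
    (n : ℕ) : A n (x n) := by
  exact h (n + 1) n (x n) (by rw [List.getElem?_ofFn]; simp)

/-- For Silver trees `T₁, T₂`: either `[T₁] ∩ [T₂]` is finite, or `T₁ ∩ T₂`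
contains a Silver tree. Consequently, if `T₁` and `T₂` have no common Silver
subtree, then `[T₁] ∩ [T₂]` is finite. -/
theorem silver_intersection_dichotomy (T₁ T₂ : Set (List Bool))
    (h₁ : IsSilver T₁) (h₂ : IsSilver T₂) :
    ((body T₁ ∩ body T₂).Finite ∨
      ∃ T : Set (List Bool), IsSilver T ∧ T ⊆ T₁ ∩ T₂) ∧
    ((¬ ∃ T : Set (List Bool), IsSilver T ∧ T ⊆ T₁ ∩ T₂) →
      (body T₁ ∩ body T₂).Finite) := by
  have main : (body T₁ ∩ body T₂).Finite ∨
      ∃ T : Set (List Bool), IsSilver T ∧ T ⊆ T₁ ∩ T₂ := by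
    obtain ⟨A, rfl⟩ := silver_eq_coordTree T₁ h₁
    obtain ⟨B, rfl⟩ := silver_eq_coordTree T₂ h₂
    rcases (body (coordTree A) ∩ body (coordTree B)).eq_empty_or_nonempty with he | ⟨f, hf⟩
    · left; rw [he]; exact Set.finite_empty
    by_cases hC : ∀ N, ∃ n ≥ N, (A n false ∧ B n false) ∧ (A n true ∧ B n true)
    · right
      refine ⟨coordTree (fun n b => A n b ∧ B n b), coordTree_silver _ f
        (fun n => ⟨body_coordTree hf.1 n, body_coordTree hf.2 n⟩) hC, fun t ht => ?_⟩
      exact ⟨fun i b hb => (ht i b hb).1, fun i b hb => (ht i b hb).2⟩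
    · left
      push Not at hC
      obtain ⟨N, hN⟩ := hC
      refine Set.Finite.of_injOn (f := fun (x : ℕ → Bool) (i : Fin N) => x i)
        (t := Set.univ) (fun _ _ => Set.mem_univ _) ?_ Set.finite_univ
      intro x hx y hy hxy
      funext n
      by_cases hn : n < N
      · exact congrFun hxy ⟨n, hn⟩
      · have a := body_coordTree hx.1 n
        have b := body_coordTree hx.2 n
        have c := body_coordTree hy.1 n
        have d := body_coordTree hy.2 n
        have e := hN n (by omega)
        cases hxn : x n <;> cases hyn : y n <;> simp_all
  exact ⟨main, fun h => main.resolve_right h⟩
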